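/- Let 1/2 < p < 1 and let r_{n,k} be the root-cluster weights for random binary search trees, i.e. random increasing d-ary trees with d=2 (φ(0)=1, φ(1)=2, φ(2)=2, φ(δ)=0 for δ>2). Then for every integer k ≥ 1, the normalized k-th moment of the root-cluster size satisfies lim_{n→∞} m_k(n)/n^{k(2p-1)} = k!·p^{2(k-1)}/((2p-1)^{2k-1}·Γ(k(2p-1)+1)). -/

import Mathlib

open Finset Filter Asymptotics

/-- The root-cluster weight recursion. -/
noncomputable def clusterRec (p : ℝ) (φ : ℕ → ℝ) (r : ℕ → ℕ → ℝ) (b : ℕ → ℝ) : Prop :=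
  (∀ m, b m = ∑ k ∈ Finset.Icc 1 m, r m k) ∧
  ∀ n k : ℕ, 1 ≤ n → 1 ≤ k →
    r n k =
      ∑ δ ∈ Finset.range n, ∑ s ∈ (Finset.range (δ + 1)).attach,
        (δ.choose s.1 : ℝ) * (φ δ / (δ.factorial : ℝ)) *
          ∑ f ∈ (Finset.Nat.antidiagonalTuple δ (n - 1)).filter (fun f => ∀ i, 1 ≤ f i),
            (((n - 1).factorial : ℝ) / ∏ i, ((f i).factorial : ℝ)) *
              ∑ g ∈ (Finset.Nat.antidiagonalTuple s.1 (k - 1)).filter (fun g => ∀ i, 1 ≤ g i),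
                p ^ s.1 * (1 - p) ^ (δ - s.1) *
                  (∏ i : Fin s.1,
                    r (f (Fin.castLE (Nat.lt_succ_iff.mp (Finset.mem_range.mp s.2)) i)) (g i)) *
                  ∏ j ∈ Finset.univ.filter (fun j : Fin δ => s.1 ≤ (j : ℕ)), b (f j)

/-- Partial Bell polynomials. -/
noncomputable def bellPartial (k j : ℕ) (x : ℕ → ℝ) : ℝ :=
  ∑ m ∈ (Fintype.piFinset (fun _ : Fin (k - j + 1) => Finset.range (k + 1))).filter
      (fun m : Fin (k - j + 1) → ℕ => (∑ i : Fin (k - j + 1), ((i : ℕ) + 1) * m i) = k ∧ (∑ i, m i) = j),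
    (k.factorial : ℝ) *
      ∏ i : Fin (k - j + 1), x ((i : ℕ) + 1) ^ m i /
        (((m i).factorial : ℝ) * (((i : ℕ) + 1).factorial : ℝ) ^ m i)

/-!
Let `P(z, x)` be the generating function of the weights `r n k / n !`, let `B(z) = P(z, 1)`, and put
`W = 1 + p P + (1 - p) B`. For binary trees the recursion reads `∂P/∂z = x W²`. At `x = 1` this
gives `(1 + B)' = (1 + B)²`, so `1 + B = (1 - z)⁻¹` and `b n = n !`. After substituting `x = e ^ t`,
the `k`-th moments of the cluster size, divided by `k !`, are the coefficients of `t ^ k`, and for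
`k ≥ 1` these turn `∂W/∂z = p e ^ t W²` into a triangular system of linear equations
`M' = 2p / (1 - z) * M + (products of lower moments)`.

Write `q = 2p - 1`. By induction on `k`, the coefficients of the `k`-th moment series grow like
those of a multiple of `(1 - z) ^ (-(k q + 1))`: such growth rates multiply, and they pass from the
inhomogeneous term to the solution by the Stolz–Cesàro theorem. The products of two lower moments of
positive order dominate, and their number yields the constant `(p / q) ^ (2k - 1)`.
-/

section NegBinomialSeries

open PowerSeries

variable {R : Type*} [CommRing R] [BinomialRing R]

/-- The power series `(1 - X) ^ (-r)`, whose coefficients `Ring.multichoose r n` are the yardsticks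
for all the growth rates below. -/
noncomputable def negBinomialSeries (r : R) : R⟦X⟧ :=
  rescale (-1) (binomialSeries R (-r))

lemma coeff_negBinomialSeries (r : R) (n : ℕ) :
    coeff n (negBinomialSeries r) = Ring.multichoose r n := by
  have hsign : ((-1 : R) ^ n) * (-1) ^ n = 1 := by rw [← mul_pow, neg_one_mul, neg_neg, one_pow]
  rw [negBinomialSeries, coeff_rescale, binomialSeries_coeff, Ring.choose_neg', smul_eq_mul,
    mul_one, Units.smul_def, zsmul_eq_mul, Int.cast_negOnePow_natCast, ← mul_assoc, hsign, one_mul]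

lemma constantCoeff_negBinomialSeries (r : R) : constantCoeff (negBinomialSeries r) = 1 := by
  rw [← coeff_zero_eq_constantCoeff_apply, coeff_negBinomialSeries, Ring.multichoose_zero_right]

lemma negBinomialSeries_zero : negBinomialSeries (0 : R) = 1 := by
  rw [negBinomialSeries, neg_zero, binomialSeries_zero, map_one]

lemma negBinomialSeries_add (r s : R) :
    negBinomialSeries (r + s) = negBinomialSeries r * negBinomialSeries s := by
  simp only [negBinomialSeries, neg_add, binomialSeries_add, map_mul]

lemma coeff_negBinomialSeries_one_mul (f : R⟦X⟧) (n : ℕ) :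
    coeff n (negBinomialSeries 1 * f) = ∑ i ∈ range (n + 1), coeff i f := by
  rw [mul_comm, coeff_mul, Nat.sum_antidiagonal_eq_sum_range_succ_mk]
  simp only [coeff_negBinomialSeries, Ring.multichoose_one, mul_one]

end NegBinomialSeries

section CharZero

open PowerSeries

variable {K : Type*} [Field K] [CharZero K]

lemma multichoose_eq_ascPochhammer_eval_div (r : K) (n : ℕ) :
    Ring.multichoose r n = (ascPochhammer K n).eval r / n.factorial := by
  rw [← Polynomial.ascPochhammer_smeval_eq_eval,
    ← Ring.factorial_nsmul_multichoose_eq_ascPochhammer, nsmul_eq_mul,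
    mul_div_cancel_left₀ _ (Nat.cast_ne_zero.mpr n.factorial_ne_zero)]

lemma add_one_mul_multichoose_succ (r : K) (n : ℕ) :
    ((n : K) + 1) * Ring.multichoose r (n + 1) = (r + n) * Ring.multichoose r n := by
  simp only [multichoose_eq_ascPochhammer_eval_div, ascPochhammer_succ_eval, Nat.factorial_succ]
  push_cast
  field_simp

lemma multichoose_succ (r : K) (n : ℕ) :
    Ring.multichoose r (n + 1) = (r + n) * Ring.multichoose r n / (n + 1) := by
  rw [← add_one_mul_multichoose_succ, mul_div_cancel_left₀ _ n.cast_add_one_ne_zero]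

lemma multichoose_pos {F : Type*} [Field F] [LinearOrder F] [IsStrictOrderedRing F] {x : F}
    (hx : 0 < x) (n : ℕ) : 0 < Ring.multichoose x n := by
  rw [multichoose_eq_ascPochhammer_eval_div]
  exact div_pos (ascPochhammer_pos n x hx) (by positivity)

lemma mul_multichoose_add_one (r : K) (n : ℕ) :
    r * Ring.multichoose (r + 1) n = ((n : K) + 1) * Ring.multichoose r (n + 1) := by
  simp only [multichoose_eq_ascPochhammer_eval_div, ascPochhammer_succ_left, Nat.factorial_succ]
  rw [Polynomial.eval_mul, Polynomial.eval_X, Polynomial.eval_comp, Polynomial.eval_add,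
    Polynomial.eval_X, Polynomial.eval_one]
  push_cast
  field_simp

lemma derivative_negBinomialSeries (r : K) :
    d⁄dX K (negBinomialSeries r) = r • negBinomialSeries (r + 1) := by
  ext n
  rw [coeff_derivative, coeff_smul, coeff_negBinomialSeries, coeff_negBinomialSeries, smul_eq_mul,
    mul_multichoose_add_one, mul_comm]

lemma eq_negBinomialSeries_one_of_derivative_eq_sq {f : K⟦X⟧} (hf : d⁄dX K f = f ^ 2)
    (h0 : constantCoeff f = 1) : f = negBinomialSeries 1 := by
  have hf0 : constantCoeff f ≠ 0 := h0 ▸ one_ne_zero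
  have hinv : f⁻¹ = negBinomialSeries (-1) := by
    refine derivative.ext ?_ ?_
    · have : f⁻¹ ^ 2 * f ^ 2 = 1 := by rw [← mul_pow, PowerSeries.inv_mul_cancel f hf0, one_pow]
      rw [derivative_inv', derivative_negBinomialSeries, neg_add_cancel, negBinomialSeries_zero,
        hf, neg_mul, this, neg_one_smul]
    · rw [constantCoeff_inv, h0, constantCoeff_negBinomialSeries, inv_one]
  calc f = f * (negBinomialSeries (-1) * negBinomialSeries 1) := by
        rw [← negBinomialSeries_add, neg_add_cancel, negBinomialSeries_zero, mul_one]
    _ = negBinomialSeries 1 := by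
        rw [← mul_assoc, ← hinv, PowerSeries.mul_inv_cancel f hf0, one_mul]

end CharZero

section Asymptotics

open Topology

lemma ascPochhammer_eval_eq_prod_range {S : Type*} [CommSemiring S] (x : S) (n : ℕ) :
    (ascPochhammer S n).eval x = ∏ j ∈ range n, (x + j) := by
  induction n with
  | zero => simp only [ascPochhammer_zero, Polynomial.eval_one, prod_range_zero]
  | succ n ih => rw [ascPochhammer_succ_eval, ih, prod_range_succ]

lemma tendsto_multichoose_div_rpow {x : ℝ} (hx : 0 < x) :
    Tendsto (fun n : ℕ => Ring.multichoose x n / (n : ℝ) ^ (x - 1)) atTop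
      (𝓝 (Real.Gamma x)⁻¹) := by
  have hGamma := (Real.GammaSeq_tendsto_Gamma x).inv₀ (Real.Gamma_pos_of_pos hx).ne'
  have hprod := hGamma.mul (tendsto_natCast_div_add_atTop x)
  rw [mul_one] at hprod
  refine hprod.congr' ?_
  filter_upwards [eventually_gt_atTop 0] with n hn
  have hn' : (0 : ℝ) < n := Nat.cast_pos.mpr hn
  have hadd : (n : ℝ) + x ≠ 0 := by positivity
  have hpow : (n : ℝ) ^ x ≠ 0 := (Real.rpow_pos_of_pos hn' x).ne'
  rw [Real.GammaSeq, prod_range_succ, ← ascPochhammer_eval_eq_prod_range,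
    multichoose_eq_ascPochhammer_eval_div, Real.rpow_sub_one hn'.ne', add_comm x]
  field_simp

lemma tendsto_multichoose_div_multichoose {x y : ℝ} (hx : 0 < x) (hxy : x < y) :
    Tendsto (fun n : ℕ => Ring.multichoose x n / Ring.multichoose y n) atTop (𝓝 0) := by
  have hy : 0 < y := hx.trans hxy
  have hquot := (tendsto_multichoose_div_rpow hx).div (tendsto_multichoose_div_rpow hy)
    (inv_pos.mpr (Real.Gamma_pos_of_pos hy)).ne'
  have hpow := (tendsto_rpow_neg_atTop (sub_pos.mpr hxy)).comp tendsto_natCast_atTop_atTop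
  have hprod := hquot.mul hpow
  rw [mul_zero] at hprod
  refine hprod.congr' ?_
  filter_upwards [eventually_gt_atTop 0] with n hn
  have hn' : (0 : ℝ) < n := Nat.cast_pos.mpr hn
  have hpow : (n : ℝ) ^ (x - 1) = (n : ℝ) ^ (y - 1) * (n : ℝ) ^ (-(y - x)) := by
    rw [← Real.rpow_add hn']
    ring_nf
  have hmc := (multichoose_pos hy n).ne'
  simp only [Pi.div_apply, Function.comp_apply, hpow]
  field_simp

lemma multichoose_div_multichoose_succ_sub {x : ℝ} (hx : 0 < x) (y : ℝ) (n : ℕ) :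
    Ring.multichoose y (n + 1) / Ring.multichoose x (n + 1)
      - Ring.multichoose y n / Ring.multichoose x n
      = (y - x) / (x + n) * (Ring.multichoose y n / Ring.multichoose x n) := by
  have := (multichoose_pos hx n).ne'
  rw [multichoose_succ, multichoose_succ]
  field_simp
  ring

lemma strictMono_multichoose_div_multichoose {x y : ℝ} (hx : 0 < x) (hxy : x < y) :
    StrictMono fun n : ℕ => Ring.multichoose y n / Ring.multichoose x n := by
  refine strictMono_nat_of_lt_succ fun n => sub_pos.mp ?_
  rw [multichoose_div_multichoose_succ_sub hx]
  exact mul_pos (div_pos (sub_pos.mpr hxy) (by positivity))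
    (div_pos (multichoose_pos (hx.trans hxy) n) (multichoose_pos hx n))

lemma tendsto_multichoose_div_multichoose_atTop {x y : ℝ} (hx : 0 < x) (hxy : x < y) :
    Tendsto (fun n : ℕ => Ring.multichoose y n / Ring.multichoose x n) atTop atTop := by
  have hpos (n : ℕ) : 0 < Ring.multichoose x n / Ring.multichoose y n :=
    div_pos (multichoose_pos hx n) (multichoose_pos (hx.trans hxy) n)
  have hlim := tendsto_nhdsWithin_iff.mpr
    ⟨tendsto_multichoose_div_multichoose hx hxy, Eventually.of_forall hpos⟩
  simpa only [Pi.inv_def, inv_div] using hlim.inv_tendsto_nhdsGT_zero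

lemma tendsto_div_of_tendsto_sub_div_sub {u v : ℕ → ℝ} {l : ℝ} (hv : StrictMono v)
    (hv_top : Tendsto v atTop atTop)
    (h : Tendsto (fun n => (u (n + 1) - u n) / (v (n + 1) - v n)) atTop (𝓝 l)) :
    Tendsto (fun n => u n / v n) atTop (𝓝 l) := by
  have hpos (n : ℕ) : 0 < v (n + 1) - v n := sub_pos.mpr (hv n.lt_succ_self)
  have hincr : (fun n => (u (n + 1) - l * v (n + 1)) - (u n - l * v n)) =o[atTop]
      fun n => v (n + 1) - v n := by
    refine (isLittleO_iff_tendsto fun n hn => absurd hn (hpos n).ne').mpr ?_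
    refine (sub_self l ▸ h.sub_const l).congr fun n => ?_
    have := (hpos n).ne'
    field_simp
    ring
  have hsum := hincr.sum_range (fun n => (hpos n).le)
    (by simpa only [sum_range_sub, ← sub_eq_add_neg] using
      tendsto_atTop_add_const_right atTop (-v 0) hv_top)
  simp only [sum_range_sub, sum_range_sub fun n => u n - l * v n] at hsum
  have hconst (a : ℝ) : (fun _ : ℕ => a) =o[atTop] v :=
    isLittleO_const_left.mpr (.inr (tendsto_abs_atTop_atTop.comp hv_top))
  have hdiff : (fun n => u n - l * v n) =o[atTop] v := by
    have hbound := hsum.trans_isBigO ((isBigO_refl v atTop).sub (hconst (v 0)).isBigO)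
    simpa only [sub_add_cancel] using hbound.add (hconst (u 0 - l * v 0))
  have hlim := hdiff.tendsto_div_nhds_zero.add_const l
  rw [zero_add] at hlim
  refine hlim.congr' ?_
  filter_upwards [hv_top.eventually_gt_atTop 0] with n hn
  field_simp
  ring

end Asymptotics

section Growth

open PowerSeries Topology

variable {β γ A B : ℝ} {f g : ℝ⟦X⟧}

/-- For `β > 0`: the coefficients of `f` grow like those of `A • (1 - X) ^ (-β)`, that is, like
`A * n ^ (β - 1) / Γ(β)`. For `A = 0` this only bounds the growth from above. -/
def HasGrowth (β : ℝ) (f : ℝ⟦X⟧) (A : ℝ) : Prop :=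
  Tendsto (fun n => coeff n f / Ring.multichoose β n) atTop (𝓝 A)

lemma hasGrowth_negBinomialSeries (hβ : 0 < β) : HasGrowth β (negBinomialSeries β) 1 := by
  refine tendsto_const_nhds.congr fun n => ?_
  rw [coeff_negBinomialSeries, div_self (multichoose_pos hβ n).ne']

namespace HasGrowth

lemma add (hf : HasGrowth β f A) (hg : HasGrowth β g B) : HasGrowth β (f + g) (A + B) := by
  simpa only [HasGrowth, map_add, add_div] using Tendsto.add hf hg

lemma smul (c : ℝ) (hf : HasGrowth β f A) : HasGrowth β (c • f) (c * A) := by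
  simpa only [HasGrowth, coeff_smul, smul_eq_mul, mul_div_assoc] using Tendsto.const_mul c hf

lemma sum {ι : Type*} {s : Finset ι} {F : ι → ℝ⟦X⟧} {a : ι → ℝ}
    (h : ∀ i ∈ s, HasGrowth β (F i) (a i)) : HasGrowth β (∑ i ∈ s, F i) (∑ i ∈ s, a i) := by
  simpa only [HasGrowth, map_sum, sum_div] using tendsto_finsetSum s h

lemma sum_zero {ι : Type*} {s : Finset ι} {F : ι → ℝ⟦X⟧} (h : ∀ i ∈ s, HasGrowth β (F i) 0) :
    HasGrowth β (∑ i ∈ s, F i) 0 := by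
  simpa only [sum_const_zero] using HasGrowth.sum h

lemma of_lt (hβ : 0 < β) (hβγ : β < γ) (hf : HasGrowth β f A) : HasGrowth γ f 0 := by
  have hlim := Tendsto.mul hf (tendsto_multichoose_div_multichoose hβ hβγ)
  rw [mul_zero] at hlim
  exact hlim.congr fun n => div_mul_div_cancel₀ (multichoose_pos hβ n).ne'

lemma tendsto_coeff_div_rpow (hβ : 0 < β) (hf : HasGrowth β f A) :
    Tendsto (fun n : ℕ => coeff n f / (n : ℝ) ^ (β - 1)) atTop (𝓝 (A / Real.Gamma β)) := by
  refine (Tendsto.mul hf (tendsto_multichoose_div_rpow hβ)).congr fun n => ?_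
  rw [div_mul_div_cancel₀ (multichoose_pos hβ n).ne']

lemma exists_abs_coeff_le (hβ : 0 < β) (hf : HasGrowth β f A) :
    ∃ K > 0, ∀ n, |coeff n f| ≤ K * Ring.multichoose β n := by
  obtain ⟨K, hK₀, hK⟩ := bound_of_isBigO_nat_atTop (hf.isBigO_one ℝ)
  refine ⟨K, hK₀, fun n => ?_⟩
  have hpos := multichoose_pos hβ n
  have := hK (x := n) one_ne_zero
  rwa [norm_one, mul_one, norm_div, Real.norm_eq_abs, Real.norm_of_nonneg hpos.le,
    div_le_iff₀ hpos] at this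

lemma exists_abs_coeff_le_add {ε : ℝ} (hβ : 0 < β) (hγ : 0 < γ) (hε : 0 < ε)
    (hf : HasGrowth β f 0) :
    ∃ C, ∀ n, |coeff n f| ≤ ε * Ring.multichoose β n + C * Ring.multichoose γ n := by
  have hsmall : ∀ᶠ n in atTop, |coeff n f| ≤ ε * Ring.multichoose β n := by
    filter_upwards [Metric.tendsto_nhds.mp hf ε hε] with n hn
    have hpos := multichoose_pos hβ n
    rw [Real.dist_0_eq_abs, abs_div, abs_of_pos hpos, div_lt_iff₀ hpos] at hn
    exact hn.le
  obtain ⟨N, hN⟩ := eventually_atTop.mp hsmall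
  have hterm (n : ℕ) : 0 ≤ |coeff n f| / Ring.multichoose γ n :=
    div_nonneg (abs_nonneg _) (multichoose_pos hγ n).le
  refine ⟨∑ i ∈ range N, |coeff i f| / Ring.multichoose γ i, fun n => ?_⟩
  have hβn := mul_pos hε (multichoose_pos hβ n)
  have hγn := multichoose_pos hγ n
  rcases le_or_gt N n with hn | hn
  · exact (hN n hn).trans
      (le_add_of_nonneg_right (mul_nonneg (sum_nonneg fun i _ => hterm i) hγn.le))
  · have := single_le_sum (fun i _ => hterm i) (mem_range.mpr hn)
    rw [div_le_iff₀ hγn] at this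
    exact this.trans (le_add_of_nonneg_left hβn.le)

lemma zero_of_forall_exists_abs_coeff_le (hγ : 0 < γ) (hγβ : γ < β)
    (h : ∀ ε > 0, ∃ C, ∀ n,
      |coeff n f| ≤ ε * Ring.multichoose β n + C * Ring.multichoose γ n) :
    HasGrowth β f 0 := by
  rw [HasGrowth, Metric.tendsto_nhds]
  intro ε hε
  obtain ⟨C, hC⟩ := h (ε / 2) (half_pos hε)
  have hlim := (tendsto_multichoose_div_multichoose hγ hγβ).const_mul C
  rw [mul_zero] at hlim
  filter_upwards [hlim.eventually_lt_const (half_pos hε)] with n hn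
  have hpos := multichoose_pos (hγ.trans hγβ) n
  rw [Real.dist_0_eq_abs, abs_div, abs_of_pos hpos]
  calc |coeff n f| / Ring.multichoose β n
      ≤ (ε / 2 * Ring.multichoose β n + C * Ring.multichoose γ n) / Ring.multichoose β n := by
        gcongr
        exact hC n
    _ = ε / 2 + C * (Ring.multichoose γ n / Ring.multichoose β n) := by field_simp
    _ < ε := by linarith

end HasGrowth

lemma abs_coeff_mul_le {R : Type*} [Ring R] [LinearOrder R] [IsStrictOrderedRing R]
    {f g F G : R⟦X⟧} (hf : ∀ n, |coeff n f| ≤ coeff n F)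
    (hg : ∀ n, |coeff n g| ≤ coeff n G) (n : ℕ) :
    |coeff n (f * g)| ≤ coeff n (F * G) := by
  simp only [coeff_mul]
  refine (abs_sum_le_sum_abs _ _).trans (sum_le_sum fun x _ => ?_)
  rw [abs_mul]
  exact mul_le_mul (hf _) (hg _) (abs_nonneg _) ((abs_nonneg _).trans (hf _))

namespace HasGrowth

lemma zero_mul (hβ : 0 < β) (hγ : 0 < γ) (hf : HasGrowth β f 0) (hg : HasGrowth γ g B) :
    HasGrowth (β + γ) (f * g) 0 := by
  refine zero_of_forall_exists_abs_coeff_le (γ := β / 2 + γ) (by positivity) (by linarith) ?_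
  intro ε hε
  obtain ⟨K, hK₀, hK⟩ := hg.exists_abs_coeff_le hγ
  obtain ⟨C, hC⟩ := hf.exists_abs_coeff_le_add hβ (half_pos hβ) (div_pos hε hK₀)
  refine ⟨C * K, fun n => ?_⟩
  have hle := abs_coeff_mul_le (f := f) (g := g)
    (F := (ε / K) • negBinomialSeries β + C • negBinomialSeries (β / 2))
    (G := K • negBinomialSeries γ)
    (by simpa only [map_add, coeff_smul, coeff_negBinomialSeries, smul_eq_mul] using hC)
    (by simpa only [coeff_smul, coeff_negBinomialSeries, smul_eq_mul] using hK) n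
  simp only [add_mul, smul_mul_assoc, mul_smul_comm, ← negBinomialSeries_add, map_add, coeff_smul,
    coeff_negBinomialSeries, smul_eq_mul] at hle
  refine hle.trans_eq ?_
  field_simp

lemma mul (hβ : 0 < β) (hγ : 0 < γ) (hf : HasGrowth β f A) (hg : HasGrowth γ g B) :
    HasGrowth (β + γ) (f * g) (A * B) := by
  have hf₀ : HasGrowth β (f + (-A) • negBinomialSeries β) 0 := by
    simpa only [mul_one, add_neg_cancel] using hf.add ((hasGrowth_negBinomialSeries hβ).smul (-A))
  have hg₀ : HasGrowth γ (g + (-B) • negBinomialSeries γ) 0 := by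
    simpa only [mul_one, add_neg_cancel] using hg.add ((hasGrowth_negBinomialSeries hγ).smul (-B))
  have hmain : HasGrowth (β + γ)
      ((A * B) • (negBinomialSeries β * negBinomialSeries γ)) (A * B) := by
    simpa only [← negBinomialSeries_add, mul_one] using
      (hasGrowth_negBinomialSeries (add_pos hβ hγ)).smul (A * B)
  have hright := (add_comm γ β ▸ hg₀.zero_mul hγ hβ (hasGrowth_negBinomialSeries hβ)).smul A
  have hsum := ((hf₀.zero_mul hβ hγ hg).add hright).add hmain
  rw [mul_zero, add_zero, zero_add] at hsum
  convert hsum using 1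
  simp only [smul_eq_C_mul, map_neg, map_mul]
  ring

lemma of_derivative (hf : HasGrowth (γ + 1) (d⁄dX ℝ f) A) :
    HasGrowth γ f (A / γ) := by
  rw [HasGrowth, ← tendsto_add_atTop_iff_nat 1]
  refine (Tendsto.div_const hf γ).congr fun n => ?_
  have hn : (n : ℝ) + 1 ≠ 0 := by positivity
  rw [coeff_derivative, div_div, mul_comm _ γ, mul_multichoose_add_one, mul_comm,
    mul_div_mul_left _ _ hn]

-- With `S = f / (1 - X)` the equation reads `(n + 1) S_{n+1} = (n + 1 + c) S_n + g_n`, and dividing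
-- by the solution `multichoose (c + 1) n` of the homogeneous recursion makes it telescope.
lemma negBinomialSeries_one_mul_of_derivative_eq {c : ℝ} (hc : -1 < c) (hcγ : c < γ)
    (hode : d⁄dX ℝ f = c • (negBinomialSeries 1 * f) + g) (hg : HasGrowth (γ + 1) g A) :
    HasGrowth (γ + 1) (negBinomialSeries 1 * f) (A / (γ - c)) := by
  set S := negBinomialSeries 1 * f with hS
  have hc' : 0 < c + 1 := by linarith
  have hcγ' : c + 1 < γ + 1 := by linarith
  have hμ (n : ℕ) := (multichoose_pos hc' n).ne'
  have hcn (n : ℕ) : c + 1 + n ≠ 0 := by positivity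
  have hu_succ (n : ℕ) : coeff (n + 1) S / Ring.multichoose (c + 1) (n + 1)
      - coeff n S / Ring.multichoose (c + 1) n
      = coeff n g / ((c + 1 + n) * Ring.multichoose (c + 1) n) := by
    have hcoeff := congrArg (coeff n) hode
    have hS_succ : coeff (n + 1) S = coeff n S + coeff (n + 1) f := by
      simp only [hS, coeff_negBinomialSeries_one_mul, sum_range_succ _ (n + 1)]
    rw [coeff_derivative, map_add, coeff_smul, smul_eq_mul] at hcoeff
    have := hcn n
    have := hμ n
    rw [multichoose_succ, hS_succ]
    field_simp
    linear_combination hcoeff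
  have hstolz : Tendsto (fun n => coeff n S / Ring.multichoose (c + 1) n
      / (Ring.multichoose (γ + 1) n / Ring.multichoose (c + 1) n)) atTop (𝓝 (A / (γ - c))) := by
    refine tendsto_div_of_tendsto_sub_div_sub (strictMono_multichoose_div_multichoose hc' hcγ')
      (tendsto_multichoose_div_multichoose_atTop hc' hcγ') ?_
    refine (Tendsto.div_const hg (γ - c)).congr fun n => ?_
    have := hcn n
    have := hμ n
    rw [hu_succ, multichoose_div_multichoose_succ_sub hc', add_sub_add_right_eq_sub]
    field_simp
  exact hstolz.congr fun n => div_div_div_cancel_right₀ (hμ n) _ _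

lemma of_derivative_eq {c : ℝ} (hc : -1 < c) (hγ : 0 < γ) (hcγ : c < γ)
    (hode : d⁄dX ℝ f = c • (negBinomialSeries 1 * f) + g) (hg : HasGrowth (γ + 1) g A) :
    HasGrowth γ f (A / (γ - c)) := by
  have hS := negBinomialSeries_one_mul_of_derivative_eq hc hcγ hode hg
  have hderiv := hode ▸ (hS.smul c).add hg
  convert hderiv.of_derivative using 1
  have : γ - c ≠ 0 := (sub_pos.mpr hcγ).ne'
  field_simp
  ring

end HasGrowth

end Growth

section MomentSystem

open PowerSeries Topology

/-- The triangular system of differential equations satisfied by the generating functions `M k` of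
the `k`-th moments of the root-cluster size, scaled by `p / k !`. It is what `∂F/∂z = p e ^ t F²`
says about the coefficients of `t ^ k`, `k ≥ 1`, of a bivariate series `F(z, t)`. -/
structure IsMomentSystem (p : ℝ) (M : ℕ → ℝ⟦X⟧) : Prop where
  zero : M 0 = negBinomialSeries 1
  constantCoeff (k : ℕ) : constantCoeff (M (k + 1)) = 0
  derivative (k : ℕ) : d⁄dX ℝ (M (k + 1)) = p • ∑ x ∈ antidiagonal (k + 1),
    (x.1.factorial : ℝ)⁻¹ • ∑ y ∈ antidiagonal x.2, M y.1 * M y.2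

-- Multiplication by the integrating factor `(1 - X) ^ c`.
lemma derivative_negBinomialSeries_neg_mul {K : Type*} [Field K] [CharZero K] {c : K} {f g : K⟦X⟧}
    (hode : d⁄dX K f = c • (negBinomialSeries 1 * f) + g) :
    d⁄dX K (negBinomialSeries (-c) * f) = negBinomialSeries (-c) * g := by
  rw [Derivation.leibniz, hode, derivative_negBinomialSeries, negBinomialSeries_add]
  simp only [smul_eq_mul, smul_eq_C_mul, map_neg]
  ring

lemma sum_antidiagonal_add_two {A : Type*} [AddCommMonoid A] (f : ℕ × ℕ → A) (k : ℕ) :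
    ∑ y ∈ antidiagonal (k + 2), f y
      = f (0, k + 2) + f (k + 2, 0) + ∑ y ∈ antidiagonal k, f (y.1 + 1, y.2 + 1) := by
  rw [Nat.sum_antidiagonal_succ, Nat.sum_antidiagonal_succ', ← add_assoc]

section ProductGrowth

variable {q a : ℝ} {M : ℕ → ℝ⟦X⟧} {k : ℕ}

lemma hasGrowth_mul_of_forall_hasGrowth (hq : 0 < q) {n i j : ℕ} (hi : i < n) (hj : j < n)
    (hM : ∀ m < n, HasGrowth (m * q + 1) (M m) (a ^ (2 * m - 1))) :
    HasGrowth ((i + j : ℕ) * q + 2) (M i * M j) (a ^ (2 * i - 1) * a ^ (2 * j - 1)) := by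
  convert (hM i hi).mul (by positivity) (by positivity) (hM j hj) using 1
  push_cast
  ring

lemma hasGrowth_sum_antidiagonal_succ_mul_succ (hq : 0 < q)
    (hM : ∀ m < k + 2, HasGrowth (m * q + 1) (M m) (a ^ (2 * m - 1))) :
    HasGrowth ((k + 2) * q + 2) (∑ y ∈ antidiagonal k, M (y.1 + 1) * M (y.2 + 1))
      ((k + 1) * a ^ (2 * k + 2)) := by
  have hsum : (k + 1) * a ^ (2 * k + 2) = ∑ _y ∈ antidiagonal k, a ^ (2 * k + 2) := by
    rw [sum_const, Nat.card_antidiagonal, nsmul_eq_mul, Nat.cast_succ]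
  rw [hsum]
  refine HasGrowth.sum fun y hy => ?_
  obtain rfl : y.1 + y.2 = k := mem_antidiagonal.mp hy
  convert hasGrowth_mul_of_forall_hasGrowth (i := y.1 + 1) (j := y.2 + 1) hq (by lia) (by lia) hM
    using 1
  · push_cast
    ring
  · rw [← pow_add]
    congr 1
    lia

lemma hasGrowth_sum_antidiagonal_mul_of_lt (hq : 0 < q)
    (hM : ∀ m < k + 2, HasGrowth (m * q + 1) (M m) (a ^ (2 * m - 1))) (c : ℕ → ℝ) :
    HasGrowth ((k + 2) * q + 2)
      (∑ x ∈ antidiagonal (k + 1), c x.1 • ∑ y ∈ antidiagonal x.2, M y.1 * M y.2) 0 := by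
  refine HasGrowth.sum_zero fun x hx => ?_
  rw [← mul_zero (c x.1)]
  refine HasGrowth.smul _ (HasGrowth.sum_zero fun y hy => ?_)
  have hx' : x.1 + x.2 = k + 1 := mem_antidiagonal.mp hx
  have hy' : y.1 + y.2 = x.2 := mem_antidiagonal.mp hy
  have hle : ((y.1 + y.2 : ℕ) : ℝ) ≤ k + 1 := by exact_mod_cast (by lia : y.1 + y.2 ≤ k + 1)
  exact (hasGrowth_mul_of_forall_hasGrowth hq (by lia) (by lia) hM).of_lt (by positivity)
    (by nlinarith)

end ProductGrowth

namespace IsMomentSystem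

variable {p : ℝ} {M : ℕ → ℝ⟦X⟧}

lemma derivative_one (h : IsMomentSystem p M) :
    d⁄dX ℝ (M 1) = (2 * p) • (negBinomialSeries 1 * M 1) + p • negBinomialSeries 2 := by
  rw [h.derivative 0, show (2 : ℝ) = 1 + 1 by norm_num, negBinomialSeries_add, ← h.zero]
  simp only [Nat.sum_antidiagonal_succ, HasAntidiagonal.antidiagonal_zero, sum_singleton, zero_add,
    Nat.factorial_zero, Nat.factorial_one, Nat.cast_one, inv_one, smul_eq_C_mul, map_add,
    map_mul, map_one]
  ring

lemma derivative_add_two (h : IsMomentSystem p M) (k : ℕ) :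
    d⁄dX ℝ (M (k + 2)) = (2 * p) • (negBinomialSeries 1 * M (k + 2))
      + p • (∑ y ∈ antidiagonal k, M (y.1 + 1) * M (y.2 + 1)
        + ∑ x ∈ antidiagonal (k + 1),
          ((x.1 + 1).factorial : ℝ)⁻¹ • ∑ y ∈ antidiagonal x.2, M y.1 * M y.2) := by
  rw [h.derivative (k + 1), Nat.sum_antidiagonal_succ, sum_antidiagonal_add_two, ← h.zero]
  simp only [Nat.factorial_zero, Nat.cast_one, inv_one, one_smul, smul_eq_C_mul, map_mul, map_ofNat]
  ring

lemma one_eq (h : IsMomentSystem p M) (hp : 2 * p - 1 ≠ 0) :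
    M 1 = (p / (2 * p - 1)) • (negBinomialSeries (2 * p) - negBinomialSeries 1) := by
  have hfactor : negBinomialSeries (-(2 * p)) * M 1
      = (p / (2 * p - 1)) • (1 - negBinomialSeries (1 - 2 * p)) := by
    refine derivative.ext ?_ ?_
    · rw [derivative_negBinomialSeries_neg_mul h.derivative_one, Derivation.map_smul, map_sub,
        Derivation.map_one_eq_zero, derivative_negBinomialSeries, zero_sub, mul_smul_comm,
        ← negBinomialSeries_add, ← neg_smul, smul_smul]
      congr 2
      · rw [neg_sub, div_mul_cancel₀ _ hp]
      · ring
    · rw [map_mul, h.constantCoeff 0, mul_zero, smul_eq_C_mul, map_mul, map_sub, map_one,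
        constantCoeff_negBinomialSeries, sub_self, mul_zero]
  calc M 1 = negBinomialSeries (2 * p) * (negBinomialSeries (-(2 * p)) * M 1) := by
        rw [← mul_assoc, ← negBinomialSeries_add, add_neg_cancel, negBinomialSeries_zero, one_mul]
    _ = (p / (2 * p - 1)) • (negBinomialSeries (2 * p) - negBinomialSeries 1) := by
        rw [hfactor, mul_smul_comm, mul_sub, mul_one, ← negBinomialSeries_add,
          add_sub_cancel]

lemma hasGrowth_one (h : IsMomentSystem p M) (hp : 1 / 2 < p) :
    HasGrowth (2 * p) (M 1) (p / (2 * p - 1)) := by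
  have hlower := ((hasGrowth_negBinomialSeries one_pos).of_lt one_pos
    (show 1 < 2 * p by linarith)).smul (-1)
  have hsum := ((hasGrowth_negBinomialSeries (show 0 < 2 * p by linarith)).add hlower).smul
    (p / (2 * p - 1))
  rwa [neg_one_smul, ← sub_eq_add_neg, mul_zero, add_zero, mul_one,
    ← h.one_eq (by linarith)] at hsum

/-- The exponent is a truncated subtraction: the limit is `1` for `k = 0`. -/
theorem hasGrowth (h : IsMomentSystem p M) (hp : 1 / 2 < p) (k : ℕ) :
    HasGrowth (k * (2 * p - 1) + 1) (M k) ((p / (2 * p - 1)) ^ (2 * k - 1)) := by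
  induction k using Nat.strong_induction_on with
  | _ k ih =>
  have hq : 0 < 2 * p - 1 := by linarith
  rcases k with - | - | k
  · simpa [h.zero] using hasGrowth_negBinomialSeries one_pos
  · simpa using h.hasGrowth_one hp
  have hmain := hasGrowth_sum_antidiagonal_succ_mul_succ hq ih
  have hlower := hasGrowth_sum_antidiagonal_mul_of_lt hq ih
    fun i => ((i + 1).factorial : ℝ)⁻¹
  have hγ : ((k : ℝ) + 2) * (2 * p - 1) + 2 = (k + 2) * (2 * p - 1) + 1 + 1 := by ring
  have hsol := HasGrowth.of_derivative_eq (by linarith) (by positivity) (by nlinarith)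
    (h.derivative_add_two k) (hγ ▸ (hmain.add hlower).smul p)
  convert hsol using 1
  · push_cast
    ring
  · rw [show 2 * (k + 1 + 1) - 1 = 2 * k + 2 + 1 by lia, pow_succ,
      show (k + 2) * (2 * p - 1) + 1 - 2 * p = (k + 1) * (2 * p - 1) by ring]
    field_simp
    ring

end IsMomentSystem

end MomentSystem

section FinProducts

open PowerSeries
open scoped Polynomial

variable {R : Type*} [CommSemiring R]

lemma prod_ite_lt_eq_prod_castLE_mul {A : Type*} [CommMonoid A] {s δ : ℕ} (h : s ≤ δ)
    (a c : Fin δ → A) :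
    ∏ i : Fin δ, (if (i : ℕ) < s then a i else c i)
      = (∏ i : Fin s, a (Fin.castLE h i)) * ∏ j ∈ univ.filter fun j : Fin δ => s ≤ j, c j := by
  have hrange : ({i : Fin δ | (i : ℕ) < s} : Finset (Fin δ)) = univ.map (Fin.castLEEmb h) := by
    ext i
    simp only [mem_filter, mem_univ, true_and, Finset.mem_map, Fin.castLEEmb_apply]
    exact ⟨fun hi => ⟨⟨i, hi⟩, rfl⟩, fun ⟨j, hj⟩ => hj ▸ j.2⟩
  simp only [prod_ite, hrange, prod_map, Fin.castLEEmb_apply, not_lt]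

lemma pow_mul_pow_sub_eq_prod_ite {A : Type*} [CommMonoid A] {s δ : ℕ} (h : s ≤ δ) (a c : A) :
    a ^ s * c ^ (δ - s) = ∏ i : Fin δ, (if (i : ℕ) < s then a else c) := by
  obtain ⟨t, rfl⟩ := Nat.exists_eq_add_of_le h
  simp [Fin.prod_univ_add]

lemma coeff_prod_fin {d : ℕ} (F : Fin d → R⟦X⟧) (n : ℕ) :
    coeff n (∏ i, F i) = ∑ f ∈ Nat.antidiagonalTuple d n, ∏ i, coeff (f i) (F i) := by
  rw [coeff_prod]
  refine sum_equiv Finsupp.equivFunOnFinite (fun f => ?_) fun f _ => rfl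
  simp [mem_finsuppAntidiag, Nat.mem_antidiagonalTuple]

lemma coeff_prod_fin_of_constantCoeff_eq_zero {d : ℕ} {F : Fin d → R⟦X⟧}
    (hF : ∀ i, constantCoeff (F i) = 0) (n : ℕ) :
    coeff n (∏ i, F i)
      = ∑ f ∈ Nat.antidiagonalTuple d n with ∀ i, 1 ≤ f i, ∏ i, coeff (f i) (F i) := by
  rw [coeff_prod_fin, sum_filter_of_ne]
  intro f _ hf i
  refine Nat.one_le_iff_ne_zero.mpr fun hi => hf (prod_eq_zero (mem_univ i) ?_)
  rw [hi, coeff_zero_eq_constantCoeff_apply, hF]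

lemma polynomial_coeff_prod_fin_of_coeff_zero_eq_zero {d : ℕ} {F : Fin d → R[X]}
    (hF : ∀ i, (F i).coeff 0 = 0) (n : ℕ) :
    (∏ i, F i).coeff n
      = ∑ f ∈ Nat.antidiagonalTuple d n with ∀ i, 1 ≤ f i, ∏ i, (F i).coeff (f i) := by
  have hcoe := coeff_prod_fin_of_constantCoeff_eq_zero (F := fun i => (F i : R⟦X⟧))
    (fun i => by rw [Polynomial.constantCoeff_coe, hF]) n
  simp only [Polynomial.coeff_coe] at hcoe
  rw [← hcoe, ← Polynomial.coeff_coe, ← Polynomial.coeToPowerSeries.ringHom_apply, map_prod]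
  rfl

end FinProducts

section ClusterSeries

open PowerSeries
open scoped Polynomial

variable {p : ℝ} {φ : ℕ → ℝ} {r : ℕ → ℕ → ℝ} {b : ℕ → ℝ}

/-- The generating polynomial, over the root-cluster size, of the weights of the trees on `n`
vertices, divided by `n !`. -/
noncomputable def clusterPoly (r : ℕ → ℕ → ℝ) (n : ℕ) : ℝ[X] :=
  ∑ k ∈ Icc 1 n, Polynomial.monomial k (r n k / n.factorial)

/-- The bivariate generating function of the weights: the power series variable marks the size of
the tree and the polynomial variable the size of the root cluster. -/
noncomputable def clusterSeries (r : ℕ → ℕ → ℝ) : ℝ[X]⟦X⟧ :=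
  mk (clusterPoly r)

/-- The exponential generating function of the total weights `b`, as a series whose coefficients
are constant polynomials. -/
noncomputable def sizeSeries (b : ℕ → ℝ) : ℝ[X]⟦X⟧ :=
  mk fun n => Polynomial.C (b n / n.factorial)

lemma coeff_clusterPoly (r : ℕ → ℕ → ℝ) (n k : ℕ) :
    (clusterPoly r n).coeff k = if 1 ≤ k ∧ k ≤ n then r n k / n.factorial else 0 := by
  simp only [clusterPoly, Polynomial.finsetSum_coeff, Polynomial.coeff_monomial, sum_ite_eq',
    mem_Icc]

lemma coeff_zero_clusterPoly (r : ℕ → ℕ → ℝ) (n : ℕ) : (clusterPoly r n).coeff 0 = 0 := by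
  simp [coeff_clusterPoly]

lemma constantCoeff_clusterSeries (r : ℕ → ℕ → ℝ) : constantCoeff (clusterSeries r) = 0 := by
  simp [clusterSeries, clusterPoly]

namespace clusterRec

lemma constantCoeff_sizeSeries (h : clusterRec p φ r b) : constantCoeff (sizeSeries b) = 0 := by
  simp [sizeSeries, h.1]

lemma eq_zero_of_lt (h : clusterRec p φ r b) {n k : ℕ} (hn : 1 ≤ n) (hnk : n < k) :
    r n k = 0 := by
  induction n using Nat.strong_induction_on generalizing k with
  | _ n ih =>
  rw [h.2 n k hn (hn.trans hnk.le)]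
  refine sum_eq_zero fun δ _ => sum_eq_zero fun s _ => mul_eq_zero_of_right _ <|
    sum_eq_zero fun f hf => mul_eq_zero_of_right _ <| sum_eq_zero fun g hg => ?_
  obtain ⟨hf_sum, hf_pos⟩ := mem_filter.mp hf
  obtain ⟨hg_sum, -⟩ := mem_filter.mp hg
  rw [Nat.mem_antidiagonalTuple] at hf_sum hg_sum
  have hs : s.1 ≤ δ := Nat.lt_succ_iff.mp (mem_range.mp s.2)
  have hf_le : ∑ i : Fin s.1, f (Fin.castLE hs i) ≤ n - 1 := by
    rw [← hf_sum]
    exact (sum_map univ (Fin.castLEEmb hs) f).symm.trans_le (sum_le_sum_of_subset (subset_univ _))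
  obtain ⟨i, -, hi⟩ : ∃ i ∈ univ, f (Fin.castLE hs i) < g i :=
    exists_lt_of_sum_lt (by lia)
  have hfi : f (Fin.castLE hs i) ≤ n - 1 :=
    (single_le_sum (fun j _ => Nat.zero_le _) (mem_univ i)).trans hf_le
  refine mul_eq_zero_of_left (mul_eq_zero_of_right _ (prod_eq_zero (mem_univ i) ?_)) _
  exact ih _ (by lia) (hf_pos _) hi

lemma coeff_clusterPoly_of_pos (h : clusterRec p φ r b) {n k : ℕ} (hn : 1 ≤ n) (hk : 1 ≤ k) :
    (clusterPoly r n).coeff k = r n k / n.factorial := by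
  rw [coeff_clusterPoly]
  split_ifs with hnk
  · rfl
  · rw [h.eq_zero_of_lt hn (by lia), zero_div]

lemma coeff_pow_mul_pow (h : clusterRec p φ r b) {s δ : ℕ} (hs : s ≤ δ) (n k : ℕ) :
    (coeff n (clusterSeries r ^ s * sizeSeries b ^ (δ - s))).coeff k
      = ∑ f ∈ Nat.antidiagonalTuple δ n with ∀ i, 1 ≤ f i,
          (∏ i, ((f i).factorial : ℝ))⁻¹ *
            ∑ g ∈ Nat.antidiagonalTuple s k with ∀ i, 1 ≤ g i,
              (∏ i : Fin s, r (f (Fin.castLE hs i)) (g i)) *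
                ∏ j ∈ univ.filter fun j : Fin δ => s ≤ j, b (f j) := by
  rw [pow_mul_pow_sub_eq_prod_ite hs, coeff_prod_fin_of_constantCoeff_eq_zero,
    Polynomial.finsetSum_coeff]
  · refine sum_congr rfl fun f hf => ?_
    obtain ⟨-, hf⟩ := mem_filter.mp hf
    have hcoeff (i : Fin δ) :
        coeff (f i) (if (i : ℕ) < s then clusterSeries r else sizeSeries b)
          = if (i : ℕ) < s then clusterPoly r (f i)
            else Polynomial.C (b (f i) / (f i).factorial) := by
      split_ifs <;> exact coeff_mk _ _
    have hfactorial : ∏ i, ((f i).factorial : ℝ)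
        = (∏ i : Fin s, ((f (Fin.castLE hs i)).factorial : ℝ)) *
          ∏ j ∈ univ.filter fun j : Fin δ => s ≤ j, ((f j).factorial : ℝ) := by
      rw [← prod_ite_lt_eq_prod_castLE_mul hs (fun i => ((f i).factorial : ℝ))]
      simp only [ite_self]
    rw [prod_congr rfl fun i _ => hcoeff i, prod_ite_lt_eq_prod_castLE_mul hs, ← map_prod,
      Polynomial.coeff_mul_C, polynomial_coeff_prod_fin_of_coeff_zero_eq_zero
        (fun _ => coeff_zero_clusterPoly r _), sum_mul, mul_sum, hfactorial]
    refine sum_congr rfl fun g hg => ?_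
    rw [prod_congr rfl fun i _ => h.coeff_clusterPoly_of_pos (hf _) ((mem_filter.mp hg).2 i),
      prod_div_distrib, prod_div_distrib, div_mul_div_comm, div_eq_inv_mul]
  · intro i
    split_ifs
    exacts [constantCoeff_clusterSeries r, h.constantCoeff_sizeSeries]

lemma eq_coeff_sum_pow (h : clusterRec p φ r b) (n k : ℕ) :
    r (n + 1) (k + 1) / n.factorial
      = (coeff n (∑ δ ∈ range (n + 1), (φ δ / δ.factorial) •
          (p • clusterSeries r + (1 - p) • sizeSeries b) ^ δ)).coeff k := by
  rw [h.2 (n + 1) (k + 1) (by lia) (by lia), map_sum, Polynomial.finsetSum_coeff, sum_div]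
  simp only [add_tsub_cancel_right]
  refine sum_congr rfl fun δ _ => ?_
  rw [LinearMap.map_smul_of_tower, Polynomial.coeff_smul, add_pow, map_sum,
    Polynomial.finsetSum_coeff, smul_eq_mul, mul_sum, sum_div, ← sum_attach (range (δ + 1))]
  refine sum_congr rfl fun s _ => ?_
  have hs : s.1 ≤ δ := Nat.lt_succ_iff.mp (mem_range.mp s.2)
  have hscale : (p • clusterSeries r) ^ s.1 * ((1 - p) • sizeSeries b) ^ (δ - s.1) * δ.choose s.1
      = (p ^ s.1 * (1 - p) ^ (δ - s.1) * δ.choose s.1) •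
        (clusterSeries r ^ s.1 * sizeSeries b ^ (δ - s.1)) := by
    rw [_root_.smul_pow, _root_.smul_pow, smul_mul_smul_comm, mul_comm, ← nsmul_eq_mul,
      ← Nat.cast_smul_eq_nsmul ℝ, smul_smul, mul_comm (δ.choose s.1 : ℝ)]
  rw [hscale, LinearMap.map_smul_of_tower, Polynomial.coeff_smul, h.coeff_pow_mul_pow hs,
    smul_eq_mul, mul_sum, mul_sum, mul_sum, sum_div]
  refine sum_congr rfl fun f _ => ?_
  simp only [mul_sum, sum_div]
  refine sum_congr rfl fun g _ => ?_
  have := Nat.factorial_ne_zero n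
  field_simp

end clusterRec

theorem clusterRec.derivative_clusterSeries (h : clusterRec p φ r b) {d : ℕ}
    (hφ : ∀ δ, d < δ → φ δ = 0) :
    d⁄dX ℝ[X] (clusterSeries r) = C Polynomial.X * ∑ δ ∈ range (d + 1), (φ δ / δ.factorial) •
      (p • clusterSeries r + (1 - p) • sizeSeries b) ^ δ := by
  set V := p • clusterSeries r + (1 - p) • sizeSeries b with hV_def
  have hV : constantCoeff V = 0 := by
    rw [hV_def, ← coeff_zero_eq_constantCoeff_apply, map_add, LinearMap.map_smul_of_tower,
      LinearMap.map_smul_of_tower, coeff_zero_eq_constantCoeff_apply,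
      coeff_zero_eq_constantCoeff_apply, constantCoeff_clusterSeries, h.constantCoeff_sizeSeries,
      smul_zero, smul_zero, add_zero]
  ext n (- | k)
  · simp [coeff_derivative, clusterSeries, coeff_zero_clusterPoly, coeff_C_mul]
  have hsum : coeff n (∑ δ ∈ range (n + 1), (φ δ / δ.factorial) • V ^ δ)
      = coeff n (∑ δ ∈ range (d + 1), (φ δ / δ.factorial) • V ^ δ) := by
    rw [map_sum, map_sum]
    refine sum_congr_of_eq_on_inter ?_ ?_ fun _ _ _ => rfl
    · intro δ _ hδ
      rw [hφ δ (by simpa using hδ), zero_div, zero_smul, map_zero]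
    · intro δ _ hδ
      rw [LinearMap.map_smul_of_tower, coeff_of_lt_order, smul_zero]
      exact lt_of_lt_of_le (by simpa using hδ) (le_order_pow_of_constantCoeff_eq_zero δ hV)
  rw [coeff_derivative, clusterSeries, coeff_mk, coeff_C_mul, Polynomial.coeff_X_mul, ← hsum,
    ← h.eq_coeff_sum_pow, ← Nat.cast_succ, ← Polynomial.C_eq_natCast, Polynomial.coeff_mul_C,
    h.coeff_clusterPoly_of_pos (by lia) (by lia), Nat.factorial_succ]
  push_cast
  field_simp

end ClusterSeries

section CoeffSeries

open PowerSeries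

variable {R : Type*} [CommSemiring R]

lemma derivative_mapAlgHom {A B : Type*} [CommSemiring A] [CommSemiring B] [Algebra R A]
    [Algebra R B] (ψ : A →ₐ[R] B) (f : A⟦X⟧) :
    d⁄dX B (mapAlgHom ψ f) = mapAlgHom ψ (d⁄dX A f) := by
  ext n
  simp [mapAlgHom_apply, coeff_derivative]

/-- The coefficient of `t ^ k` in a bivariate series `F(z, t)`, as a series in `z`. The outer
variable of `R⟦X⟧⟦X⟧` is `z` and the inner one is `t`. -/
noncomputable def coeffSeries (k : ℕ) : R⟦X⟧⟦X⟧ →ₗ[R] R⟦X⟧ where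
  toFun F := mk fun n => coeff k (coeff n F)
  map_add' F G := by ext n; simp only [map_add, coeff_mk]
  map_smul' c F := by ext n; simp

lemma coeff_coeffSeries (k n : ℕ) (F : R⟦X⟧⟦X⟧) :
    coeff n (coeffSeries k F) = coeff k (coeff n F) := by
  simp [coeffSeries]

lemma coeffSeries_mul (k : ℕ) (F G : R⟦X⟧⟦X⟧) :
    coeffSeries k (F * G) = ∑ x ∈ antidiagonal k, coeffSeries x.1 F * coeffSeries x.2 G := by
  ext n
  simp only [coeff_coeffSeries, coeff_mul, map_sum]
  exact sum_comm

lemma coeffSeries_map_C (k : ℕ) (f : R⟦X⟧) :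
    coeffSeries k (map C f) = if k = 0 then f else 0 := by
  ext n
  rw [coeff_coeffSeries, coeff_map, coeff_C]
  split_ifs <;> simp

lemma coeffSeries_C (k : ℕ) (a : R⟦X⟧) : coeffSeries k (C a) = C (coeff k a) := by
  ext n
  rw [coeff_coeffSeries, coeff_C, coeff_C]
  split_ifs <;> simp

lemma derivative_coeffSeries (k : ℕ) (F : R⟦X⟧⟦X⟧) :
    d⁄dX R (coeffSeries k F) = coeffSeries k (d⁄dX R⟦X⟧ F) := by
  ext n
  rw [coeff_derivative, coeff_coeffSeries, coeff_coeffSeries, coeff_derivative,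
    ← Nat.cast_succ, ← Nat.cast_succ, ← map_natCast (C (R := R)), coeff_mul_C]

end CoeffSeries

section DaryTree

open PowerSeries
open scoped Polynomial

/-- The degree weights of random increasing `d`-ary trees. -/
noncomputable def daryWeight (d δ : ℕ) : ℝ :=
  if δ ≤ d then (d.factorial : ℝ) / (d - δ).factorial else 0

/-- The bivariate generating function of the possibly empty subtree in one of the `d` positions
below a vertex of the root cluster, which is joined to the cluster with probability `p`. -/
noncomputable def subtreeSeries (p : ℝ) (r : ℕ → ℕ → ℝ) (b : ℕ → ℝ) : ℝ[X]⟦X⟧ :=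
  1 + (p • clusterSeries r + (1 - p) • sizeSeries b)

lemma daryWeight_div_factorial {d δ : ℕ} (h : δ ≤ d) :
    daryWeight d δ / δ.factorial = d.choose δ := by
  rw [daryWeight, if_pos h, Nat.cast_choose ℝ h, div_div, mul_comm (δ.factorial : ℝ)]

variable {p : ℝ} {d : ℕ} {r : ℕ → ℕ → ℝ} {b : ℕ → ℝ}

lemma mapAlgHom_subtreeSeries {A : Type*} [CommSemiring A] [Algebra ℝ A] (ψ : ℝ[X] →ₐ[ℝ] A) :
    mapAlgHom ψ (subtreeSeries p r b) = 1 + (p • mapAlgHom ψ (clusterSeries r)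
      + (1 - p) • mapAlgHom ψ (sizeSeries b)) := by
  simp only [subtreeSeries, map_add, map_one, map_smul]

namespace clusterRec

lemma derivative_clusterSeries_dary (h : clusterRec p (daryWeight d) r b) :
    d⁄dX ℝ[X] (clusterSeries r) = C Polynomial.X * subtreeSeries p r b ^ d := by
  rw [h.derivative_clusterSeries (d := d) fun δ hδ => if_neg hδ.not_ge, subtreeSeries,
    add_comm 1 (p • _ + _), add_pow]
  refine congr_arg _ (sum_congr rfl fun δ hδ => ?_)
  rw [daryWeight_div_factorial (Nat.lt_succ_iff.mp (mem_range.mp hδ)), one_pow, mul_one,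
    Nat.cast_smul_eq_nsmul, nsmul_eq_mul, mul_comm]

lemma mapAlgHom_aeval_one_clusterSeries {φ : ℕ → ℝ} (h : clusterRec p φ r b) :
    mapAlgHom (Polynomial.aeval 1) (clusterSeries r) = mk fun n => b n / n.factorial := by
  ext n
  simp [mapAlgHom_apply, clusterSeries, clusterPoly, h.1, sum_div]

lemma one_add_mk_div_factorial (h : clusterRec p (daryWeight 2) r b) :
    1 + mk (fun n => b n / n.factorial) = negBinomialSeries 1 := by
  have hcluster := h.mapAlgHom_aeval_one_clusterSeries
  have hsize : mapAlgHom (Polynomial.aeval (1 : ℝ)) (sizeSeries b)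
      = mk fun n => b n / n.factorial := by
    ext n
    simp [mapAlgHom_apply, sizeSeries]
  refine eq_negBinomialSeries_one_of_derivative_eq_sq ?_ ?_
  · rw [map_add, Derivation.map_one_eq_zero, zero_add]
    nth_rw 1 [← hcluster]
    rw [derivative_mapAlgHom, h.derivative_clusterSeries_dary, map_mul, map_pow,
      mapAlgHom_subtreeSeries, hcluster, hsize, ← add_smul, add_sub_cancel, one_smul,
      mapAlgHom_apply, map_C, RingHom.coe_coe, Polynomial.aeval_X, map_one, one_mul]
  · simp [h.1]

lemma eq_factorial (h : clusterRec p (daryWeight 2) r b) {n : ℕ} (hn : n ≠ 0) :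
    b n = n.factorial := by
  have hcoeff := congr_arg (coeff n) h.one_add_mk_div_factorial
  rw [map_add, coeff_one, if_neg hn, zero_add, coeff_mk, coeff_negBinomialSeries,
    Ring.multichoose_one, div_eq_one_iff_eq (Nat.cast_ne_zero.mpr n.factorial_ne_zero)] at hcoeff
  exact hcoeff

end clusterRec

/-- The generating function of the `k`-th moments of the root-cluster size, up to the factors `p`
and `k !`: the coefficient of `t ^ k` in `subtreeSeries` after substituting `exp t` for the
variable marking the cluster size. -/
noncomputable def momentSeries (p : ℝ) (r : ℕ → ℕ → ℝ) (b : ℕ → ℝ) (k : ℕ) : ℝ⟦X⟧ :=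
  coeffSeries k (mapAlgHom (Polynomial.aeval (exp ℝ)) (subtreeSeries p r b))

lemma coeff_aeval_exp_clusterPoly (r : ℕ → ℕ → ℝ) (n k : ℕ) :
    coeff k (Polynomial.aeval (exp ℝ) (clusterPoly r n))
      = (∑ j ∈ Icc 1 n, (j : ℝ) ^ k * r n j) / (n.factorial * k.factorial) := by
  simp only [clusterPoly, map_sum, Polynomial.aeval_monomial, exp_pow_eq_rescale_exp,
    PowerSeries.algebraMap_apply, Algebra.algebraMap_self_apply, coeff_C_mul, coeff_rescale,
    coeff_exp, sum_div]
  refine sum_congr rfl fun j _ => ?_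
  simp only [map_div₀, map_one, map_natCast]
  field_simp

lemma momentSeries_eq (p : ℝ) (r : ℕ → ℕ → ℝ) (b : ℕ → ℝ) (k : ℕ) :
    momentSeries p r b k
      = (if k = 0 then 1 + (1 - p) • mk (fun n => b n / n.factorial) else 0)
        + p • coeffSeries k (mapAlgHom (Polynomial.aeval (exp ℝ)) (clusterSeries r)) := by
  have hsize : mapAlgHom (Polynomial.aeval (exp ℝ)) (sizeSeries b)
      = PowerSeries.map C (mk fun n => b n / n.factorial) := by
    ext1 n
    simp [mapAlgHom_apply, sizeSeries]
  rw [momentSeries, mapAlgHom_subtreeSeries, hsize, map_add, map_add, map_smul, map_smul,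
    ← map_one (PowerSeries.map C), coeffSeries_map_C, coeffSeries_map_C]
  split_ifs
  · ring
  · simp only [smul_zero, add_zero, zero_add]

lemma coeff_momentSeries (p : ℝ) (r : ℕ → ℕ → ℝ) (b : ℕ → ℝ) {k : ℕ} (hk : k ≠ 0) (n : ℕ) :
    coeff n (momentSeries p r b k)
      = p * ((∑ j ∈ Icc 1 n, (j : ℝ) ^ k * r n j) / (n.factorial * k.factorial)) := by
  rw [momentSeries_eq, if_neg hk, zero_add, coeff_smul, coeff_coeffSeries, mapAlgHom_apply,
    coeff_map, clusterSeries, coeff_mk, RingHom.coe_coe, coeff_aeval_exp_clusterPoly, smul_eq_mul]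

theorem clusterRec.isMomentSystem_momentSeries (h : clusterRec p (daryWeight 2) r b) :
    IsMomentSystem p (momentSeries p r b) where
  zero := by
    have hcluster : coeffSeries 0 (mapAlgHom (Polynomial.aeval (exp ℝ)) (clusterSeries r))
        = mk fun n => b n / n.factorial := by
      ext n
      simp [coeff_coeffSeries, mapAlgHom_apply, clusterSeries, coeff_aeval_exp_clusterPoly, h.1]
    rw [momentSeries_eq, if_pos rfl, hcluster, add_assoc, ← add_smul, sub_add_cancel, one_smul,
      h.one_add_mk_div_factorial]
  constantCoeff k := by
    rw [← coeff_zero_eq_constantCoeff_apply, coeff_momentSeries p r b k.succ_ne_zero]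
    simp
  derivative k := by
    rw [momentSeries_eq, if_neg k.succ_ne_zero, zero_add, Derivation.map_smul,
      derivative_coeffSeries, derivative_mapAlgHom, h.derivative_clusterSeries_dary, map_mul,
      map_pow, mapAlgHom_apply, map_C, RingHom.coe_coe, Polynomial.aeval_X, coeffSeries_mul]
    refine congr_arg _ (sum_congr rfl fun x _ => ?_)
    rw [coeffSeries_C, coeff_exp, sq, coeffSeries_mul, smul_eq_C_mul]
    simp [momentSeries]

end DaryTree

theorem stmt15_general (p : ℝ) (hp0 : 1 / 2 < p) (r : ℕ → ℕ → ℝ) (b : ℕ → ℝ)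
    (hrec : clusterRec p
      (fun δ => if δ ≤ 2 then ((Nat.factorial 2 : ℝ) / ((2 - δ).factorial : ℝ)) else 0) r b)
    (k : ℕ) (hk : 1 ≤ k) :
    Tendsto (fun n : ℕ =>
        ((∑ j ∈ Finset.Icc 1 n, (j : ℝ) ^ k * r n j) / b n)
          / (n : ℝ) ^ ((k : ℝ) * (2 * p - 1)))
      atTop
      (nhds ((k.factorial : ℝ) * p ^ (2 * (k - 1))
        / ((2 * p - 1) ^ (2 * k - 1) * Real.Gamma ((k : ℝ) * (2 * p - 1) + 1)))) := by
  have h : clusterRec p (daryWeight 2) r b := hrec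
  have hq : 0 < 2 * p - 1 := by linarith
  have hβ : 0 < k * (2 * p - 1) + 1 := by positivity
  have hlim := ((h.isMomentSystem_momentSeries.hasGrowth hp0 k).tendsto_coeff_div_rpow hβ).const_mul
    (k.factorial / p)
  convert hlim.congr' ?_ using 2
  · rw [show 2 * k - 1 = 2 * (k - 1) + 1 by lia, div_pow]
    field_simp
    ring
  · filter_upwards [eventually_ge_atTop 1] with n hn
    rw [coeff_momentSeries p r b (by lia), h.eq_factorial (by lia), add_sub_cancel_right]
    field_simp

/-- for random binary search trees (`d = 2`) with `1/2 < p < 1`, the `k`-th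
moment of the root-cluster size, normalized by `n^{k(2p-1)}`, converges to
`k! p^{2(k-1)} / ((2p-1)^{2k-1} Γ(k(2p-1)+1))`. -/
theorem stmt15 (p : ℝ) (hp0 : 1 / 2 < p) (hp1 : p < 1)
    (r : ℕ → ℕ → ℝ) (b : ℕ → ℝ)
    (hrec : clusterRec p
      (fun δ => if δ ≤ 2 then ((Nat.factorial 2 : ℝ) / ((2 - δ).factorial : ℝ)) else 0) r b)
    (k : ℕ) (hk : 1 ≤ k) :
    Tendsto (fun n : ℕ =>
        ((∑ j ∈ Finset.Icc 1 n, (j : ℝ) ^ k * r n j) / b n)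
          / (n : ℝ) ^ ((k : ℝ) * (2 * p - 1)))
      atTop
      (nhds ((k.factorial : ℝ) * p ^ (2 * (k - 1))
        / ((2 * p - 1) ^ (2 * k - 1) * Real.Gamma ((k : ℝ) * (2 * p - 1) + 1)))) :=
  stmt15_general p hp0 r b hrec k hk
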